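/- arXiv:1102.2127 — 17 statements merged into one kernel-verified Lean document; each statement's English description precedes it below -/
import Mathlib

section
/- Let G be a groupoid (a set with a binary operation *) that is idempotent (x*x = x for all x). If for some n ≥ 3 the identity ⟨x₁⋯xₙ⟩_L = ⟨x₁⋯xₙ⟩_R holds for all x₁,…,xₙ ∈ G (the left-associated product equals the right-associated product of any n elements), then G is a semigroup, i.e. * is associative. -/
/-- The left-associated product `((x * l₁) * l₂) * ⋯ * lₘ`. -/
def leftAssoc {G : Type*} (op : G → G → G) (x : G) (l : List G) : G :=
  l.foldl op x

/-- The right-associated product `x * (l₁ * (l₂ * (⋯ * lₘ)))`. -/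
def rightAssoc {G : Type*} (op : G → G → G) : G → List G → G
  | x, [] => x
  | x, y :: l => op x (rightAssoc op y l)

theorem aux_right {G : Type*} (op : G → G → G) (x y : G) (l : List G) (k : ℕ) :
    rightAssoc op x (List.replicate k x ++ y :: l) = (op x)^[k+1] (rightAssoc op y l) := by
  induction k with
  | zero => rfl
  | succ k ih =>
    rw [Function.iterate_succ_apply', ← ih]
    rfl

theorem aux_left {G : Type*} (op : G → G → G) (idem : ∀ x : G, op x x = x)
    (x : G) (l : List G) (k : ℕ) :
    leftAssoc op x (List.replicate k x ++ l) = leftAssoc op x l := by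
  induction k with
  | zero => rfl
  | succ k ih =>
    rw [← ih]
    simp [leftAssoc, List.replicate_succ, idem]

/-- If an idempotent groupoid satisfies
`⟨x₁⋯xₙ⟩_L = ⟨x₁⋯xₙ⟩_R` for some `n ≥ 3`, then it is a semigroup. -/
theorem idempotent_leftAssoc_eq_rightAssoc_implies_assoc
    {G : Type*} (op : G → G → G)
    (idem : ∀ x : G, op x x = x)
    (n : ℕ) (hn : 3 ≤ n)
    (h : ∀ (x : G) (l : List G), l.length = n - 1 →
      leftAssoc op x l = rightAssoc op x l) :
    ∀ x y z : G, op (op x y) z = op x (op y z) := by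
  have key : ∀ (x y : G) (l : List G) (k : ℕ), k + l.length + 2 = n →
      leftAssoc op x (y :: l) = (op x)^[k+1] (rightAssoc op y l) := by
    intro x y l k hk
    rw [← aux_right, ← aux_left op idem x (y :: l) k]
    apply h
    simp
    omega
  obtain ⟨m, rfl⟩ : ∃ m, n = m + 3 := ⟨n - 3, by omega⟩
  have hA : ∀ x y, op x y = (op x)^[m+2] y := fun x y => key x y [] (m+1) (by simp)
  have hC : ∀ x y z, op (op x y) z = (op x)^[m+1] (op y z) :=
    fun x y z => key x y [z] m (by simp)
  cases m with
  | zero => intro x y z; exact hC x y z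
  | succ m =>
    have hB : ∀ x z, op (op (op x z) z) z = (op x)^[m+1] z := by
      intro x z
      have := key x z [z, z] m (by simp)
      simpa [leftAssoc, rightAssoc, idem] using this
    have hLL : ∀ x y, op x (op x y) = op x y := by
      intro x y
      have h2 : op (op x (op x y)) (op x y) = op x y := by
        rw [hC, idem, ← Function.iterate_succ_apply]
        exact (hA x y).symm
      have h3 := hB x (op x y)
      rw [h2, idem] at h3
      calc op x (op x y) = op x ((op x)^[m+1] (op x y)) := by rw [← h3]
        _ = (op x)^[m+1+2] y := by
          rw [← Function.iterate_succ_apply, ← Function.iterate_succ_apply' (op x)]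
        _ = op x y := (hA x y).symm
    have hit : ∀ k x y, (op x)^[k+1] y = op x y := by
      intro k x y
      induction k with
      | zero => rfl
      | succ k ih => rw [Function.iterate_succ_apply', ih, hLL]
    intro x y z
    rw [hC, hit]
end

section
/- Let G be an idempotent groupoid and n ≥ 3 such that ⟨x₁⋯xₙ⟩_L = ⟨x₁⋯xₙ⟩_R holds for all x₁,…,xₙ ∈ G. Then for every k with 1 ≤ k ≤ n−1 and all x, y ∈ G, one has x*y^(n−k) = ᵏx*y, i.e. the left-associated product of x followed by n−k copies of y equals the right-associated product of k copies of x followed by y. -/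
/-- `x * yᵐ`, the left-associated product of `x` followed by `m` copies of `y`. -/
def lpow {G : Type*} (op : G → G → G) (x y : G) (m : ℕ) : G :=
  leftAssoc op x (List.replicate m y)

/-- `ᵏx * y`, the right-associated product of `k` copies of `x` followed by `y`. -/
def rpow {G : Type*} (op : G → G → G) (x y : G) : ℕ → G
  | 0 => y
  | k + 1 => op x (rpow op x y k)

theorem foldl_replicate_self {G : Type*} (op : G → G → G) (idem : ∀ x : G, op x x = x)
    (x : G) (a : ℕ) : (List.replicate a x).foldl op x = x := by
  induction a with
  | zero => rfl
  | succ a ih => rw [List.replicate_succ, List.foldl_cons, idem, ih]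

theorem rightAssoc_replicate_self {G : Type*} (op : G → G → G) (idem : ∀ x : G, op x x = x)
    (y : G) (b : ℕ) : rightAssoc op y (List.replicate b y) = y := by
  induction b with
  | zero => rfl
  | succ b ih => rw [List.replicate_succ, rightAssoc, ih, idem]

theorem rightAssoc_block {G : Type*} (op : G → G → G) (idem : ∀ x : G, op x x = x)
    (x y : G) (a b : ℕ) :
    rightAssoc op x (List.replicate a x ++ List.replicate (b + 1) y) = rpow op x y (a + 1) := by
  induction a with
  | zero =>
    rw [List.replicate_zero, List.nil_append, List.replicate_succ, rightAssoc,
      rightAssoc_replicate_self op idem]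
    rfl
  | succ a ih =>
    rw [List.replicate_succ, List.cons_append, rightAssoc, ih]
    rfl

/-- In an idempotent groupoid satisfying `⟨x₁⋯xₙ⟩_L = ⟨x₁⋯xₙ⟩_R` for some `n ≥ 3`,
one has `x * y^(n-k) = ᵏx * y` for all `1 ≤ k ≤ n - 1`. -/
theorem idempotent_leftAssoc_eq_rightAssoc_powers
    {G : Type*} (op : G → G → G)
    (idem : ∀ x : G, op x x = x)
    (n : ℕ) (hn : 3 ≤ n)
    (h : ∀ (x : G) (l : List G), l.length = n - 1 →
      leftAssoc op x l = rightAssoc op x l) :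
    ∀ k : ℕ, 1 ≤ k → k ≤ n - 1 →
      ∀ x y : G, lpow op x y (n - k) = rpow op x y k := by
  intro k hk1 hk2 x y
  obtain ⟨a, rfl⟩ : ∃ a, k = a + 1 := ⟨k - 1, by omega⟩
  obtain ⟨b, hb⟩ : ∃ b, n - (a + 1) = b + 1 := ⟨n - (a + 1) - 1, by omega⟩
  have key := h x (List.replicate a x ++ List.replicate (b + 1) y)
    (by rw [List.length_append, List.length_replicate, List.length_replicate]; omega)
  rw [rightAssoc_block op idem, leftAssoc, List.foldl_append,
    foldl_replicate_self op idem] at key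
  rw [hb]
  exact key
end

section
/- Let G be an idempotent groupoid and n ≥ 3 such that both identities x₀*⟨x₁⋯xₙ⟩_L = x₀*⟨x₁⋯xₙ⟩_R and ⟨x₁⋯xₙ⟩_L*x₀ = ⟨x₁⋯xₙ⟩_R*x₀ hold for all x₀, x₁,…,xₙ ∈ G. Then G is a semigroup, i.e. * is associative. -/
lemma rightAssoc_append {G : Type*} (op : G → G → G) (x y z : G) (k : ℕ) :
    rightAssoc op x (List.replicate k x ++ [y, z]) = (op x)^[k + 1] (op y z) := by
  induction k with
  | zero => simp [rightAssoc]
  | succ k ih =>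
    rw [List.replicate_succ, List.cons_append, rightAssoc, ih, ← Function.iterate_succ_apply' (op x)]

lemma rightAssoc_replicate {G : Type*} (op : G → G → G) (idem : ∀ x : G, op x x = x) (z : G) (k : ℕ) :
    rightAssoc op z (List.replicate k z) = z := by
  induction k with
  | zero => simp [rightAssoc]
  | succ k ih => rw [List.replicate_succ, rightAssoc, ih, idem]

lemma foldl_replicate_idem {G : Type*} (op : G → G → G) (idem : ∀ x : G, op x x = x) (x : G) (k : ℕ) :
    List.foldl op x (List.replicate k x) = x := by
  induction k with
  | zero => simp
  | succ k ih => rw [List.replicate_succ, List.foldl_cons, idem, ih]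

lemma foldl_replicate_iter {G : Type*} (op : G → G → G) (x z : G) (k : ℕ) :
    List.foldl op x (List.replicate k z) = (fun t => op t z)^[k] x := by
  induction k generalizing x with
  | zero => simp
  | succ k ih => rw [List.replicate_succ, List.foldl_cons, ih, Function.iterate_succ_apply]

/-- An idempotent groupoid satisfying the identities
`x₀*⟨x₁⋯xₙ⟩_L = x₀*⟨x₁⋯xₙ⟩_R` and `⟨x₁⋯xₙ⟩_L*x₀ = ⟨x₁⋯xₙ⟩_R*x₀`
for some `n ≥ 3` must be a semigroup. -/
theorem idempotent_mul_leftAssoc_eq_mul_rightAssoc_implies_assoc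
    {G : Type*} (op : G → G → G)
    (idem : ∀ x : G, op x x = x)
    (n : ℕ) (hn : 3 ≤ n)
    (h₁ : ∀ (x₀ x : G) (l : List G), l.length = n - 1 →
      op x₀ (leftAssoc op x l) = op x₀ (rightAssoc op x l))
    (h₂ : ∀ (x₀ x : G) (l : List G), l.length = n - 1 →
      op (leftAssoc op x l) x₀ = op (rightAssoc op x l) x₀) :
    ∀ x y z : G, op (op x y) z = op x (op y z) := by
  obtain ⟨k, rfl⟩ : ∃ k, n = k + 3 := ⟨n - 3, by omega⟩
  have LR : ∀ (x : G) (l : List G), l.length = k + 2 → leftAssoc op x l = rightAssoc op x l := by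
    intro x l hl
    rw [← idem (leftAssoc op x l), h₁ _ _ _ hl, h₂ _ _ _ hl, idem]
  -- `(x y) z = λ_x^q (y z)`
  have A : ∀ x y z : G, op (op x y) z = (op x)^[k + 1] (op y z) := by
    intro x y z
    rw [← rightAssoc_append, ← LR _ _ (by simp)]
    simp [leftAssoc, foldl_replicate_idem op idem]
  -- `x (y z) = ρ_z^q (x y)`
  have A' : ∀ x y z : G, op x (op y z) = (fun t => op t z)^[k + 1] (op x y) := by
    intro x y z
    have h := LR x (y :: List.replicate (k + 1) z) (by simp)
    rw [leftAssoc, List.foldl_cons, foldl_replicate_iter] at h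
    rw [h, rightAssoc, List.replicate_succ, rightAssoc, rightAssoc_replicate op idem]
  have B : ∀ x y : G, (op x)^[k + 1] (op x y) = op x y := by
    intro x y
    rw [← A, idem]
  have B' : ∀ x z : G, (fun t => op t z)^[k + 1] (op x z) = op x z := by
    intro x z
    rw [← A', idem]
  have H : ∀ x u : G, op x (op x u) = op x u := by
    intro x u
    have hc : op x (op x u) = (fun t => op t u)^[k + 1] x := by rw [A', idem]
    have hl : ∀ z, op (op x (op x u)) z = op (op x u) z := by
      intro z
      rw [A x (op x u) z, A x u z, Function.iterate_succ_apply' (op x) k (op u z), B]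
    have h1 : op (op x (op x u)) u = op x u := by
      have h := B' x u
      rw [← Function.iterate_succ_apply (fun t => op t u),
        Function.iterate_succ_apply' (fun t => op t u), ← hc] at h
      exact h
    obtain ⟨d, hd⟩ : ∃ d, op x (op x u) = op d u :=
      ⟨_, hc.trans (Function.iterate_succ_apply' (fun t => op t u) k x)⟩
    have hr : ∀ z, op z (op x u) = op z (op x (op x u)) := by
      intro z
      rw [← h1, A' z (op x (op x u)) u, h1, hd, A' z d u,
        Function.iterate_succ_apply' (fun t => op t u) k (op z d)]
      exact B' _ _
    calc op x (op x u) = op (op x (op x u)) (op x (op x u)) := (idem _).symm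
      _ = op (op x u) (op x (op x u)) := hl _
      _ = op (op x u) (op x u) := (hr _).symm
      _ = op x u := idem _
  intro x y z
  rw [A]
  have : ∀ j w, (op x)^[j + 1] w = op x w := by
    intro j w
    induction j with
    | zero => rfl
    | succ j ih => rw [Function.iterate_succ_apply', ih, H]
  exact this k _
end

section
/- Let G be an idempotent groupoid and n ≥ 4 such that for all x₁,…,xₙ ∈ G the identity ⟨x₁⋯xₙ⟩_L = x₁*⟨x₂⋯xₙ⟩_L holds, and such that for all x, y ∈ G the identity (x*y)*x^(n−3) = (x*y)*x^(n−2) holds. Then G is a semigroup, i.e. * is associative. -/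
/-- An idempotent groupoid satisfying, for some `n ≥ 4`, the identity
`⟨x₁⋯xₙ⟩_L = x₁*⟨x₂⋯xₙ⟩_L` together with `(x*y)*x^(n-3) = (x*y)*x^(n-2)`
must be a semigroup. -/
theorem idempotent_nulla_harom_implies_assoc
    {G : Type*} (op : G → G → G)
    (idem : ∀ x : G, op x x = x)
    (n : ℕ) (hn : 4 ≤ n)
    (h₁ : ∀ (x y : G) (l : List G), (y :: l).length = n - 1 →
      leftAssoc op x (y :: l) = op x (leftAssoc op y l))
    (h₂ : ∀ x y : G, lpow op (op x y) x (n - 3) = lpow op (op x y) x (n - 2)) :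
    ∀ x y z : G, op (op x y) z = op x (op y z) := by
  obtain ⟨k, rfl⟩ : ∃ k, n = k + 4 := ⟨n - 4, by omega⟩
  have e1 : k + 4 - 3 = k + 1 := by omega
  have e2 : k + 4 - 2 = k + 2 := by omega
  have e3 : k + 4 - 1 = k + 3 := by omega
  rw [e1, e2] at h₂
  rw [e3] at h₁
  -- basic facts on powers
  have Ps : ∀ (a y : G) (j : ℕ), lpow op a y (j + 1) = lpow op (op a y) y j := by
    intro a y j
    simp [lpow, leftAssoc, List.replicate_succ]
  have Ps' : ∀ (a y : G) (j : ℕ), lpow op a y (j + 1) = op (lpow op a y j) y := by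
    intro a y j
    simp [lpow, leftAssoc, List.replicate_succ']
  have Pi : ∀ (y : G) (j : ℕ), lpow op y y j = y := by
    intro y j
    induction j with
    | zero => rfl
    | succ j ih => rw [Ps, idem, ih]
  have unf : ∀ (a y : G) (j : ℕ), List.foldl op a (List.replicate j y) = lpow op a y j :=
    fun _ _ _ => rfl
  -- specializations of the main identity
  have per : ∀ x y, lpow op x y (k + 3) = op x y := by
    intro x y
    have h := h₁ x y (List.replicate (k + 2) y) (by simp)
    simp only [leftAssoc, List.foldl_cons, unf, Pi, ← Ps] at h
    exact h
  have hP : ∀ x y z, op (lpow op x y (k + 2)) z = op x (op y z) := by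
    intro x y z
    have h := h₁ x y (List.replicate (k + 1) y ++ [z]) (by simp)
    simp only [leftAssoc, List.foldl_cons, List.foldl_append, List.foldl_nil, unf, Pi, ← Ps] at h
    exact h
  have hE : ∀ x y z, lpow op (op x y) z (k + 2) = op x (lpow op y z (k + 2)) := by
    intro x y z
    exact h₁ x y (List.replicate (k + 2) z) (by simp)
  have hQ : ∀ x y z, op (op (lpow op x y (k + 1)) z) (op y z) = op x (op y z) := by
    intro x y z
    have h := h₁ x y (List.replicate k y ++ [z, op y z]) (by simp)
    simp only [leftAssoc, List.foldl_cons, List.foldl_append, List.foldl_nil, unf, Pi, ← Ps,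
      idem] at h
    exact h
  have hL : ∀ x y, op x (op x y) = op x y := by
    intro x y
    rw [← hP, Pi]
  have perl : ∀ x y, lpow op (op x y) y (k + 2) = op x y := by
    intro x y
    rw [← Ps, per]
  have f1 : ∀ x y, op (op x (op y x)) x = op x (op y x) := by
    intro x y
    have a1 : lpow op (op x (op y x)) x (k + 2) = op x (op y x) := by rw [hE, perl]
    have a2 := congrArg (fun t => op t x) (h₂ x (op y x))
    simp only [← Ps', a1] at a2
    exact a2.symm
  have f2 : ∀ x y, op (op x (op y x)) y = op x y := by
    intro x y
    have a1 : lpow op (op x (op y x)) y (k + 2) = lpow op x y (k + 2) := by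
      rw [← hP x y x, hE, idem]
    have a2 := congrArg (fun t => op t y) a1
    simp only [← Ps', per] at a2
    exact a2
  have f3 : ∀ x y z, op (op x y) (op y z) = op (op x y) z := by
    intro x y z
    rw [← hP, perl]
  have f4 : ∀ x y z, op (op x (op y z)) (op y z) = op (op x y) z := by
    intro x y z
    have h := hQ (op x y) y z
    rw [← Ps, hP, f3] at h
    exact h
  have f5 : ∀ x y, op (op (op x y) x) y = op x y := by
    intro x y
    have h := f2 x (op x y)
    have a : lpow op x (op x y) (k + 2) = op x y := by
      rw [Ps, hL, Pi]
    rw [← hP x (op x y) x, a, hL, f3] at h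
    exact h
  have f6 : ∀ x y, op x (op y x) = op (op x y) x := by
    intro x y
    have h := f5 x (op y x)
    rw [f1, f4] at h
    exact h.symm
  have f7 : ∀ x y, op x (op (op y x) y) = op x y := by
    intro x y
    have h := f2 x (op (op y x) y)
    rw [f5, f3, f2] at h
    exact h.symm
  have f8 : ∀ x y, op (op x y) y = op x y := by
    intro x y
    have c1 : op (op (op y x) y) y = op (op y x) y := by
      rw [← f6, f1]
    have h := f4 x (op (op y x) y) y
    rw [c1, f7] at h
    rw [← h]
    have h' := f4 x (op y x) y
    rw [f7, f2] at h'
    exact h'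
  have f9 : ∀ (x y : G) (j : ℕ), lpow op (op x y) y j = op x y := by
    intro x y j
    induction j with
    | zero => rfl
    | succ j ih => rw [Ps, f8, ih]
  intro x y z
  have h := hE x y z
  rw [Ps, f9, Ps, f9] at h
  exact h
end

section
/- Let G be an idempotent groupoid and n ≥ 3 such that for all x₁,…,xₙ ∈ G the identity ⟨x₁⋯xₙ⟩_L = x₁*⟨x₂⋯xₙ⟩_L holds. Then for all x, y, z ∈ G one has (x*y^(n−2))*z = x*(y*z), and in particular x*y^(n−1) = x*y. -/
/-- In an idempotent groupoid satisfying, for some `n ≥ 3`, the identity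
`⟨x₁⋯xₙ⟩_L = x₁*⟨x₂⋯xₙ⟩_L`, one has `(x*y^(n-2))*z = x*(y*z)` and
`x*y^(n-1) = x*y`. -/
theorem idempotent_nulla_consequences
    {G : Type*} (op : G → G → G)
    (idem : ∀ x : G, op x x = x)
    (n : ℕ) (hn : 3 ≤ n)
    (h : ∀ (x y : G) (l : List G), (y :: l).length = n - 1 →
      leftAssoc op x (y :: l) = op x (leftAssoc op y l)) :
    (∀ x y z : G, op (lpow op x y (n - 2)) z = op x (op y z)) ∧
    (∀ x y : G, lpow op x y (n - 1) = op x y) := by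
  obtain ⟨k, rfl⟩ : ∃ k, n = k + 3 := ⟨n - 3, by omega⟩
  have hfix : ∀ (y : G) (m : ℕ), List.foldl op y (List.replicate m y) = y := by
    intro y m
    induction m with
    | zero => rfl
    | succ m ih => rw [List.replicate_succ, List.foldl_cons, idem, ih]
  have key : ∀ x y z : G, op (lpow op x y (k + 1)) z = op x (op y z) := by
    intro x y z
    have h1 := h x y (List.replicate k y ++ [z]) (by simp)
    simp only [leftAssoc, List.foldl_cons, List.foldl_append, List.foldl_nil, hfix] at h1
    simpa only [lpow, leftAssoc, List.replicate_succ, List.foldl_cons] using h1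
  refine ⟨key, ?_⟩
  intro x y
  have h2 := key x y y
  rw [idem] at h2
  change lpow op x y (k + 1 + 1) = op x y
  rw [← h2]
  simp only [lpow, leftAssoc, List.replicate_succ' (n := k + 1), List.foldl_append,
    List.foldl_cons, List.foldl_nil]
end

section
/- Every idempotent groupoid satisfying the identity x*((y*z)*u) = (x*y)*(z*u) for all x, y, z, u is a semigroup, i.e. its operation is associative. -/
/-- Every idempotent groupoid satisfying `x*((y*z)*u) = (x*y)*(z*u)` is a semigroup. -/
theorem idempotent_B2_eq_B3_implies_assoc
    {G : Type*} (op : G → G → G)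
    (idem : ∀ x : G, op x x = x)
    (h : ∀ x y z u : G, op x (op (op y z) u) = op (op x y) (op z u)) :
    ∀ x y z : G, op (op x y) z = op x (op y z) := by
  have hr : ∀ y z : G, op (op y z) z = op y z := by
    intro y z
    have h1 := h y z z z
    simp only [idem] at h1
    exact h1.symm
  intro x y z
  have h2 := h x y z z
  rw [idem z, hr y z] at h2
  exact h2.symm
end

section
/- Let G be a groupoid satisfying the identity x*(y*(z*u)) = x*((y*z)*u) for all x, y, z, u ∈ G. Then for every n ≥ 1, every bracketing B of size n, every list x₁,…,xₙ of elements of G, and every x ∈ G, one has x * B(x₁,…,xₙ) = x * ⟨x₁⋯xₙ⟩_R. In particular, if t₁ ≈ t₂ is an identity between two bracketings of the same product (an identity valid in every semigroup), then x*t₁ = x*t₂ holds in G. -/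
/-- A bracketing: a full binary tree. Its leaves, read from left to right,
carry the variables of the bracketed product. -/
inductive Bracketing : Type
  | leaf : Bracketing
  | node : Bracketing → Bracketing → Bracketing

/-- The size of a bracketing: its number of leaves. -/
def Bracketing.size : Bracketing → ℕ
  | .leaf => 1
  | .node P Q => P.size + Q.size

/-- Evaluate a bracketing in a groupoid `(G, op)` on the variables
`f i, f (i+1), …` (assigned to the leaves from left to right). -/
def Bracketing.eval {G : Type*} (op : G → G → G) : Bracketing → (ℕ → G) → ℕ → G
  | .leaf, f, i => f i
  | .node P Q, f, i => op (P.eval op f i) (Q.eval op f (i + P.size))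

/-- The right-associated product `f i * (f (i+1) * (⋯ * f (i+m)))`. -/
def rightAssocFrom {G : Type*} (op : G → G → G) (f : ℕ → G) : ℕ → ℕ → G
  | i, 0 => f i
  | i, m + 1 => op (f i) (rightAssocFrom op f (i + 1) m)

/-- Right-associated product of `m` variables followed by a tail `u`. -/
def accFrom {G : Type*} (op : G → G → G) (f : ℕ → G) : ℕ → ℕ → G → G
  | _, 0, u => u
  | i, m + 1, u => op (f i) (accFrom op f (i + 1) m u)

theorem accFrom_add {G : Type*} (op : G → G → G) (f : ℕ → G) (m k : ℕ) (u : G) :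
    ∀ i, accFrom op f i (m + k) u = accFrom op f i m (accFrom op f (i + m) k u) := by
  induction m with
  | zero => intro i; simp [accFrom]
  | succ m ih =>
    intro i
    rw [show m + 1 + k = (m + k) + 1 by omega, show i + (m + 1) = i + 1 + m by omega]
    simp only [accFrom]
    rw [ih]

theorem rightAssocFrom_add {G : Type*} (op : G → G → G) (f : ℕ → G) (m k : ℕ) :
    ∀ i, rightAssocFrom op f i (m + k) = accFrom op f i m (rightAssocFrom op f (i + m) k) := by
  induction m with
  | zero => intro i; simp [accFrom]
  | succ m ih =>
    intro i
    rw [show m + 1 + k = (m + k) + 1 by omega, show i + (m + 1) = i + 1 + m by omega]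
    simp only [accFrom, rightAssocFrom]
    rw [ih]

theorem Bracketing.size_pos' (B : Bracketing) : 0 < B.size := by
  induction B with
  | leaf => simp [Bracketing.size]
  | node P Q hP hQ => simp only [Bracketing.size]; omega

theorem mul_eval_mul {G : Type*} (op : G → G → G)
    (hA : ∀ x y z u : G, op x (op y (op z u)) = op x (op (op y z) u))
    (f : ℕ → G) (B : Bracketing) : ∀ (i : ℕ) (x u : G),
      op x (op (B.eval op f i) u) = op x (accFrom op f i B.size u) := by
  induction B with
  | leaf => intro i x u; rfl
  | node P Q hP hQ =>
    intro i x u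
    simp only [Bracketing.eval, Bracketing.size]
    rw [← hA, hQ, hP, accFrom_add]

theorem mul_eval {G : Type*} (op : G → G → G)
    (hA : ∀ x y z u : G, op x (op y (op z u)) = op x (op (op y z) u))
    (f : ℕ → G) (B : Bracketing) : ∀ (i : ℕ) (x : G),
      op x (B.eval op f i) = op x (rightAssocFrom op f i (B.size - 1)) := by
  induction B with
  | leaf => intro i x; rfl
  | node P Q hP hQ =>
    intro i x
    have := Q.size_pos'
    simp only [Bracketing.eval, Bracketing.size]
    rw [hQ, mul_eval_mul op hA, Nat.add_sub_assoc this, rightAssocFrom_add]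

/-- In a groupoid satisfying `x*(y*(z*u)) = x*((y*z)*u)`, for every bracketing `B`
one has `x * B(x₁,…,xₙ) = x * ⟨x₁⋯xₙ⟩_R`; in particular `x*t₁ = x*t₂` for any
two bracketings `t₁, t₂` of the same product. -/
theorem mul_bracketing_eq_mul_rightAssoc
    {G : Type*} (op : G → G → G)
    (hA : ∀ x y z u : G, op x (op y (op z u)) = op x (op (op y z) u)) :
    (∀ (B : Bracketing) (f : ℕ → G) (x : G),
      op x (B.eval op f 0) = op x (rightAssocFrom op f 0 (B.size - 1))) ∧
    (∀ (B B' : Bracketing) (f : ℕ → G) (x : G), B.size = B'.size →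
      op x (B.eval op f 0) = op x (B'.eval op f 0)) := by
  refine ⟨fun B f x => mul_eval op hA f B 0 x, fun B B' f x h => ?_⟩
  rw [mul_eval op hA, mul_eval op hA, h]
end

section
/- Let G be a groupoid satisfying the identity x*(y*(z*u)) = x*((y*z)*u) for all x, y, z, u ∈ G, and let B and B′ be two bracketings of size n. If the sets {|lⁱ(B)| : i ≥ 1} and {|lⁱ(B′)| : i ≥ 1} of iterated left-factor sizes of B and B′ coincide, then B and B′ induce the same n-ary function on G, i.e. B(x₁,…,xₙ) = B′(x₁,…,xₙ) for all x₁,…,xₙ ∈ G. -/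
/-- The list `|l(B)|, |l²(B)|, …` of sizes of the iterated left factors of a
bracketing `B`. -/
def Bracketing.leftFactorSizes : Bracketing → List ℕ
  | .leaf => []
  | .node P _ => P.size :: P.leftFactorSizes

theorem Bracketing.lt_size_of_mem (B : Bracketing) :
    ∀ m ∈ B.leftFactorSizes, m < B.size := by
  induction B with
  | leaf => simp [Bracketing.leftFactorSizes]
  | node P Q ihP ihQ =>
    intro m hm
    have hQ := Q.size_pos'
    simp only [Bracketing.leftFactorSizes, List.mem_cons] at hm
    simp only [Bracketing.size]
    rcases hm with rfl | hm
    · omega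
    · have := ihP m hm
      omega

/-- Value of the right comb on `f i, …, f (i+k)`. -/
def rightComb {G : Type*} (op : G → G → G) (f : ℕ → G) : ℕ → ℕ → G
  | 0, i => f i
  | k + 1, i => op (f i) (rightComb op f k (i + 1))

theorem op_append_comb {G : Type*} (op : G → G → G)
    (hA : ∀ x y z u : G, op x (op y (op z u)) = op x (op (op y z) u)) (f : ℕ → G)
    (P : Bracketing) : ∀ (x : G) (k i : ℕ),
      op x (op (P.eval op f i) (rightComb op f k (i + P.size)))
        = op x (rightComb op f (k + P.size) i) := by
  induction P with
  | leaf => intro x k i; rfl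
  | node P Q ihP ihQ =>
    intro x k i
    simp only [Bracketing.eval, Bracketing.size]
    rw [← hA, ← add_assoc i, ihQ, ihP, add_assoc, add_comm Q.size]

theorem op_eval_eq_comb {G : Type*} (op : G → G → G)
    (hA : ∀ x y z u : G, op x (op y (op z u)) = op x (op (op y z) u)) (f : ℕ → G)
    (Q : Bracketing) : ∀ (x : G) (i : ℕ),
      op x (Q.eval op f i) = op x (rightComb op f (Q.size - 1) i) := by
  induction Q with
  | leaf => intro x i; rfl
  | node P Q ihP ihQ =>
    intro x i
    have hQ := Q.size_pos'
    simp only [Bracketing.eval, Bracketing.size]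
    rw [ihQ, op_append_comb op hA]
    congr 2
    omega

theorem bracketing_aux {G : Type*} (op : G → G → G)
    (hA : ∀ x y z u : G, op x (op y (op z u)) = op x (op (op y z) u)) (f : ℕ → G)
    (B : Bracketing) : ∀ B' : Bracketing, B.size = B'.size →
      (∀ m, m ∈ B.leftFactorSizes ↔ m ∈ B'.leftFactorSizes) →
      B.eval op f 0 = B'.eval op f 0 := by
  induction B with
  | leaf =>
    intro B' _ h
    cases B' with
    | leaf => rfl
    | node P' Q' =>
      have := h P'.size
      simp [Bracketing.leftFactorSizes] at this
  | node P Q ihP ihQ =>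
    intro B' hs h
    cases B' with
    | leaf =>
      have := h P.size
      simp [Bracketing.leftFactorSizes] at this
    | node P' Q' =>
      simp only [Bracketing.leftFactorSizes, List.mem_cons] at h
      simp only [Bracketing.size] at hs
      have l1 := P.lt_size_of_mem
      have l2 := P'.lt_size_of_mem
      have hP : P.size = P'.size := by
        rcases (h P.size).1 (Or.inl rfl) with h1 | h1
        · exact h1
        · rcases (h P'.size).2 (Or.inl rfl) with h2 | h2
          · exact h2.symm
          · have := l1 _ h2
            have := l2 _ h1
            omega
      have hQ : Q.size = Q'.size := by omega
      have hE := ihP P' hP (by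
        intro m
        constructor
        · intro hm
          have := l1 m hm
          rcases (h m).1 (Or.inr hm) with h1 | h1
          · omega
          · exact h1
        · intro hm
          have := l2 m hm
          rcases (h m).2 (Or.inr hm) with h1 | h1
          · omega
          · exact h1)
      simp only [Bracketing.eval]
      rw [op_eval_eq_comb op hA f Q, op_eval_eq_comb op hA f Q', hE, hP, hQ]

/-- In a groupoid satisfying `x*(y*(z*u)) = x*((y*z)*u)`, two bracketings of the
same size whose sets `{|lⁱ(B)| : i ≥ 1}` of iterated left-factor sizes coincide
induce the same function. -/
theorem bracketing_eq_of_leftFactorSizes_eq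
    {G : Type*} (op : G → G → G)
    (hA : ∀ x y z u : G, op x (op y (op z u)) = op x (op (op y z) u))
    (B B' : Bracketing) (n : ℕ) (hB : B.size = n) (hB' : B'.size = n)
    (hset : {m | m ∈ B.leftFactorSizes} = {m | m ∈ B'.leftFactorSizes}) :
    ∀ f : ℕ → G, B.eval op f 0 = B'.eval op f 0 := by
  intro f
  exact bracketing_aux op hA f B B' (hB.trans hB'.symm) (fun m => Set.ext_iff.1 hset m)
end

section
/- Let G be a groupoid satisfying the identity x*(y*(z*u)) = x*((y*z)*u) for all x, y, z, u ∈ G. Then for every n ≥ 2, the number of distinct n-ary functions Gⁿ → G induced by bracketings of size n is at most 2^(n−2); that is, s_G(n) ≤ 2^(n−2). -/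
namespace Bracketing

/-- Right comb with `k+1` leaves. -/
def comb : ℕ → Bracketing
  | 0 => .leaf
  | k + 1 => .node .leaf (comb k)

/-- Replace the rightmost leaf by a product of two leaves. -/
def ext : Bracketing → Bracketing
  | .leaf => .node .leaf .leaf
  | .node P Q => .node P (ext Q)

/-- Normal forms of size `n+2`. -/
def nf : ℕ → List Bracketing
  | 0 => [.node .leaf .leaf]
  | n + 1 => (nf n).map (fun B => .node B .leaf) ++ (nf n).map ext

theorem length_nf (n : ℕ) : (nf n).length = 2 ^ n := by
  induction n with
  | zero => rfl
  | succ n ih => simp [nf, ih, pow_succ]; omega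

theorem size_pos (B : Bracketing) : 1 ≤ B.size := by
  induction B with
  | leaf => simp [size]
  | node P Q h1 h2 => simp [size]; omega

theorem ext_comb (k : ℕ) : ext (comb k) = comb (k + 1) := by
  induction k with
  | zero => rfl
  | succ k ih => simp [comb, ext, ih]

theorem size_comb (k : ℕ) : (comb k).size = k + 1 := by
  induction k with
  | zero => rfl
  | succ k ih => simp [comb, size, ih]; omega

variable {G : Type*} (op : G → G → G)

theorem node_comb (hA : ∀ x y z u : G, op x (op y (op z u)) = op x (op (op y z) u))
    (Q : Bracketing) : ∀ (k : ℕ) (x : G) (f : ℕ → G) (i : ℕ),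
      op x ((node Q (comb k)).eval op f i) = op x ((comb (k + Q.size)).eval op f i) := by
  induction Q with
  | leaf => intro k x f i; rfl
  | node P R hP hR =>
    intro k x f i
    have h1 := hR k (P.eval op f i) f (i + P.size)
    have h2 := hP (k + R.size) x f i
    simp only [eval, size] at h1 h2 ⊢
    rw [← hA, ← add_assoc i, h1, h2, show k + R.size + P.size = k + (P.size + R.size) by omega]

theorem op_comb (hA : ∀ x y z u : G, op x (op y (op z u)) = op x (op (op y z) u))
    (Q : Bracketing) : ∀ (x : G) (f : ℕ → G) (i : ℕ),
      op x (Q.eval op f i) = op x ((comb (Q.size - 1)).eval op f i) := by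
  induction Q with
  | leaf => intro x f i; rfl
  | node P R hP hR =>
    intro x f i
    have h1 := hR (P.eval op f i) f (i + P.size)
    have h2 := node_comb op hA P (R.size - 1) x f i
    have := size_pos R
    simp only [eval, size] at h1 h2 ⊢
    rw [h1, h2, show R.size - 1 + P.size = P.size + R.size - 1 by omega]

theorem node_comb_mem (P : Bracketing) (m : ℕ) (h : node P leaf ∈ nf m) (k : ℕ) :
    node P (comb k) ∈ nf (m + k) := by
  induction k with
  | zero => exact h
  | succ k ih =>
    rw [← add_assoc, nf, List.mem_append]
    right
    rw [List.mem_map]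
    exact ⟨_, ih, by simp [ext, ext_comb]⟩

theorem exists_nf (hA : ∀ x y z u : G, op x (op y (op z u)) = op x (op (op y z) u))
    (B : Bracketing) : ∀ n : ℕ, B.size = n + 2 →
      ∃ C ∈ nf n, C.size = B.size ∧ ∀ f i, B.eval op f i = C.eval op f i := by
  induction B with
  | leaf => intro n h; simp [size] at h
  | node P Q hP _ =>
    intro n h
    have hp := size_pos P
    have hq := size_pos Q
    simp only [size] at h
    obtain ⟨C, hC, hs, he⟩ : ∃ C, node C leaf ∈ nf (P.size - 1) ∧ C.size = P.size ∧
        ∀ f i, P.eval op f i = C.eval op f i := by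
      by_cases h2 : P.size = 1
      · refine ⟨P, ?_, rfl, fun _ _ => rfl⟩
        cases P with
        | leaf => simp [size, nf]
        | node A B =>
          have := size_pos A
          have := size_pos B
          simp only [size] at h2
          omega
      · obtain ⟨C, hC, hs, he⟩ := hP (P.size - 2) (by omega)
        refine ⟨C, ?_, hs, he⟩
        rw [show P.size - 1 = P.size - 2 + 1 by omega, nf, List.mem_append]
        left
        exact List.mem_map.2 ⟨C, hC, rfl⟩
    refine ⟨node C (comb (Q.size - 1)), ?_, ?_, ?_⟩
    · have := node_comb_mem C _ hC (Q.size - 1)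
      rwa [show P.size - 1 + (Q.size - 1) = n by omega] at this
    · simp only [size, size_comb]; omega
    · intro f i
      simp only [eval]
      rw [op_comb op hA Q, he, hs]

end Bracketing

/-- In a groupoid satisfying `x*(y*(z*u)) = x*((y*z)*u)`, the number of distinct
`n`-ary functions induced by bracketings of size `n` is at most `2^(n-2)`:
the associative spectrum satisfies `s_G(n) ≤ 2^(n-2)` for `n ≥ 2`. -/
theorem spectrum_le_two_pow
    {G : Type*} (op : G → G → G)
    (hA : ∀ x y z u : G, op x (op y (op z u)) = op x (op (op y z) u))
    (n : ℕ) (hn : 2 ≤ n) :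
    Set.Finite {F : (Fin n → G) → G | ∃ B : Bracketing, B.size = n ∧
      F = fun v => B.eval op (fun i => v ⟨i % n, Nat.mod_lt i (by omega)⟩) 0} ∧
    Set.ncard {F : (Fin n → G) → G | ∃ B : Bracketing, B.size = n ∧
      F = fun v => B.eval op (fun i => v ⟨i % n, Nat.mod_lt i (by omega)⟩) 0} ≤
      2 ^ (n - 2) := by
  classical
  let L : List ((Fin n → G) → G) := (Bracketing.nf (n - 2)).map
    (fun B v => B.eval op (fun i => v ⟨i % n, Nat.mod_lt i (by omega)⟩) 0)
  have hsub : {F : (Fin n → G) → G | ∃ B : Bracketing, B.size = n ∧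
      F = fun v => B.eval op (fun i => v ⟨i % n, Nat.mod_lt i (by omega)⟩) 0} ⊆
      (L.toFinset : Set ((Fin n → G) → G)) := by
    rintro F ⟨B, hB, rfl⟩
    obtain ⟨C, hC, -, he⟩ := Bracketing.exists_nf op hA B (n - 2) (by omega)
    simp only [List.coe_toFinset, Set.mem_setOf_eq]
    exact List.mem_map.2 ⟨C, hC, funext fun v => (he _ _).symm⟩
  refine ⟨(Finset.finite_toSet _).subset hsub, ?_⟩
  refine (Set.ncard_le_ncard hsub (Finset.finite_toSet _)).trans ?_
  rw [Set.ncard_coe_finset]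
  refine (List.toFinset_card_le _).trans ?_
  simp [L, Bracketing.length_nf]
end

section
/- Let G be an idempotent groupoid satisfying the identity x*(y*x) = x*y for all x, y ∈ G. If a, b ∈ G are such that a*x = b*x for all x ∈ G, then a = b. -/
/-- In an idempotent groupoid satisfying `x*(y*x) = x*y`, elements inducing the
same left translation are equal: if `a*x = b*x` for all `x`, then `a = b`. -/
theorem left_translation_injective
    {G : Type*} (op : G → G → G)
    (idem : ∀ x : G, op x x = x)
    (h : ∀ x y : G, op x (op y x) = op x y)
    (a b : G) (hab : ∀ x : G, op a x = op b x) :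
    a = b := by
  have h1 : op a b = b := (hab b).trans (idem b)
  have h2 : op b a = a := (hab a).symm.trans (idem a)
  have h3 := h a b
  rw [h2, idem, h1] at h3
  exact h3
end

section
/- Let G be a Szász–Hájek groupoid whose unique nonassociative triple is (a, b, c). Then for all x, y ∈ G: x*y = a implies x = a or y = a; x*y = b implies x = b or y = b; and x*y = c implies x = c or y = c. -/
/-- In a Szász–Hájek groupoid with unique nonassociative triple `(a, b, c)`,
if `x*y` equals `a` (resp. `b`, `c`) then one of the factors equals `a`
(resp. `b`, `c`). -/
theorem SH_product_eq_component
    {G : Type*} (op : G → G → G) (a b c : G)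
    (hSH : ∀ x y z : G,
      op (op x y) z ≠ op x (op y z) ↔ x = a ∧ y = b ∧ z = c) :
    ∀ x y : G,
      (op x y = a → x = a ∨ y = a) ∧
      (op x y = b → x = b ∨ y = b) ∧
      (op x y = c → x = c ∨ y = c) := by
  have assoc : ∀ x y z : G, ¬ (x = a ∧ y = b ∧ z = c) →
      op (op x y) z = op x (op y z) := by
    intro x y z h
    by_contra hne
    exact h ((hSH x y z).1 hne)
  have hn : op (op a b) c ≠ op a (op b c) := (hSH a b c).2 ⟨rfl, rfl, rfl⟩
  intro x y
  refine ⟨fun h => ?_, fun h => ?_, fun h => ?_⟩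
  · by_contra! hc
    obtain ⟨hx, hy⟩ := hc
    apply hn
    rw [← h, assoc x y b (fun t => hx t.1), assoc x (op y b) c (fun t => hx t.1),
      assoc y b c (fun t => hy t.1), assoc x y (op b c) (fun t => hx t.1)]
  · by_contra! hc
    obtain ⟨hx, hy⟩ := hc
    apply hn
    rw [← h, ← assoc a x y (fun t => hx t.2.1), assoc (op a x) y c (fun t => hy t.2.1),
      assoc a x (op y c) (fun t => hx t.2.1), assoc x y c (fun t => hy t.2.1)]
  · by_contra! hc
    obtain ⟨hx, hy⟩ := hc
    apply hn
    rw [← h, ← assoc (op a b) x y (fun t => hy t.2.2), assoc a b x (fun t => hx t.2.2),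
      assoc a (op b x) y (fun t => hy t.2.2), assoc b x y (fun t => hy t.2.2)]
end

section
/- Let G be an idempotent Szász–Hájek groupoid of type (a, b, c), i.e. its unique nonassociative triple (a, b, c) has pairwise distinct components. Then for all x, y ∈ G: x*(x*y) = x*y, (x*y)*y = x*y, x*(y*x) = (x*y)*x, x*(y*(x*y)) = x*y, and (x*y)*(y*x) = (x*y)*x. -/
/-- In an idempotent Szász–Hájek groupoid of type `(a, b, c)` (pairwise distinct
components), the identities `x*(x*y) = x*y`, `(x*y)*y = x*y`,
`x*(y*x) = (x*y)*x`, `x*(y*(x*y)) = x*y` and `(x*y)*(y*x) = (x*y)*x` hold. -/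
theorem SH_type_abc_identities
    {G : Type*} (op : G → G → G) (a b c : G)
    (idem : ∀ x : G, op x x = x)
    (hSH : ∀ x y z : G,
      op (op x y) z ≠ op x (op y z) ↔ x = a ∧ y = b ∧ z = c)
    (hab : a ≠ b) (hbc : b ≠ c) (hac : a ≠ c) :
    (∀ x y : G, op x (op x y) = op x y) ∧
    (∀ x y : G, op (op x y) y = op x y) ∧
    (∀ x y : G, op x (op y x) = op (op x y) x) ∧
    (∀ x y : G, op x (op y (op x y)) = op x y) ∧
    (∀ x y : G, op (op x y) (op y x) = op (op x y) x) := by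
  have as : ∀ x y z : G, ¬ (x = a ∧ y = b ∧ z = c) → op (op x y) z = op x (op y z) := by
    intro x y z h
    by_contra h'
    exact h ((hSH x y z).1 h')
  have na : op (op a b) c ≠ op a (op b c) := (hSH a b c).2 ⟨rfl, rfl, rfl⟩
  have h1 : ∀ x y : G, op x (op x y) = op x y := by
    intro x y
    rw [← as x x y (fun h => hab (h.1.symm.trans h.2.1)), idem]
  have h2 : ∀ x y : G, op (op x y) y = op x y := by
    intro x y
    rw [as x y y (fun h => hbc (h.2.1.symm.trans h.2.2)), idem]
  have h3 : ∀ x y : G, op x (op y x) = op (op x y) x := by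
    intro x y
    rw [as x y x (fun h => hac (h.1.symm.trans h.2.2))]
  refine ⟨h1, h2, h3, ?_, ?_⟩
  · intro x y
    by_cases h : x = a ∧ y = b ∧ op x y = c
    · obtain ⟨rfl, rfl, h⟩ := h
      exfalso
      apply na
      have e : op x (op y c) = c := by
        calc op x (op y c) = op x (op y (op x y)) := by rw [h]
          _ = op x (op (op y x) y) := by rw [h3 y x]
          _ = op (op x (op y x)) y := (as _ _ _ (fun h => hbc h.2.2)).symm
          _ = op (op (op x y) x) y := by rw [h3 x y]
          _ = op (op c x) y := by rw [h]
          _ = op c (op x y) := as _ _ _ (fun h => hac h.1.symm)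
          _ = c := by rw [h, idem]
      rw [e, h, idem]
    · rw [← as _ _ _ h, idem]
  · intro x y
    by_cases h : op x y = a ∧ y = b ∧ x = c
    · obtain ⟨h, rfl, rfl⟩ := h
      exfalso
      apply na
      have e : op a (op y x) = op a x := by
        calc op a (op y x) = op (op x y) (op y x) := by rw [h]
          _ = op x (op y (op y x)) := as _ _ _ (fun h => hac h.1.symm)
          _ = op x (op y x) := by rw [h1]
          _ = op (op x y) x := h3 x y
          _ = op a x := by rw [h]
      have e2 : op a y = a := by
        have := h2 x y
        rwa [h] at this
      rw [e, e2]
    · rw [← as _ _ _ h, h2]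
end

section
/- Let G be an idempotent Szász–Hájek groupoid of type (a, b, c), i.e. its unique nonassociative triple (a, b, c) has pairwise distinct components. Then for all x, y ∈ G: ((x*y)*x)*((y*x)*y) = x*y. -/
/-- In an idempotent Szász–Hájek groupoid of type `(a, b, c)` (pairwise distinct
components), the identity `((x*y)*x)*((y*x)*y) = x*y` holds. -/
theorem SH_type_abc_xyx_yxy
    {G : Type*} (op : G → G → G) (a b c : G)
    (idem : ∀ x : G, op x x = x)
    (hSH : ∀ x y z : G,
      op (op x y) z ≠ op x (op y z) ↔ x = a ∧ y = b ∧ z = c)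
    (hab : a ≠ b) (hbc : b ≠ c) (hac : a ≠ c) :
    ∀ x y : G, op (op (op x y) x) (op (op y x) y) = op x y := by
  have as : ∀ x y z : G, ¬ (x = a ∧ y = b ∧ z = c) → op (op x y) z = op x (op y z) := by
    intro x y z h
    by_contra h'
    exact h ((hSH x y z).1 h')
  have nas : op (op a b) c ≠ op a (op b c) := (hSH a b c).2 ⟨rfl, rfl, rfl⟩
  -- a product decomposition of `a` has one factor equal to `a`
  have irr : ∀ u v : G, op u v = a → u = a ∨ v = a := by
    intro u v h
    by_contra! hn
    apply nas
    have h1 := as u v b (by tauto)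
    have h2 := as u (op v b) c (by tauto)
    have h3 := as v b c (by tauto)
    have h4 := as u v (op b c) (by tauto)
    rw [← h, h1, h2, h3, h4]
  intro x y
  have e0 := as x y x (by grind)
  by_cases c1 : op (op x y) x = a ∧ op y x = b ∧ y = c
  · obtain ⟨p, q, r⟩ := c1
    have hx : x = a := by
      rcases irr x b (by rw [← q, ← e0, p]) with h | h
      · exact h
      · exact absurd h.symm hab
    subst hx r
    exfalso
    apply nas
    have h1 := as y x y (by tauto)
    have h2 := as x y (op x y) (by tauto)
    have h3 : op x b = x := by rw [← q, ← e0, p]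
    rw [h3, ← q, h1, ← h2, idem]
  by_cases c2 : op x y = a ∧ x = b ∧ op y x = c
  · obtain ⟨p, q, r⟩ := c2
    have hy : y = a := by
      rcases irr x y p with h | h
      · exact absurd (h.symm.trans q) hab
      · exact h
    subst hy q
    have h1 := as y x y (by tauto)
    rw [p, h1, p, idem, h1, p, idem]
  by_cases c3 : op x y = a ∧ x = b ∧ y = c
  · obtain ⟨p, q, r⟩ := c3
    rcases irr x y p with h | h
    · exact absurd (h.symm.trans q) hab
    · exact absurd (h.symm.trans r) hac
  have h1 := as _ _ _ c1
  have h2 := as _ _ _ c2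
  have h3 := as _ _ _ c3
  have h4 := as (op x y) (op x y) x (by grind)
  rw [← h1, h2, ← e0, ← h4, idem, h3, idem]
end

section
/- Let G be a groupoid satisfying the 𝓑 identities (x*x = x, x*(x*y) = x*y, x*(y*x) = x*y, (x*y)*x = x*y, (x*y)*y = x*y, (x*y)*(y*x) = x*y for all x, y), and suppose G is a Szász–Hájek groupoid of type (a, b, c), i.e. its unique nonassociative triple (a, b, c) has pairwise distinct components, and suppose moreover that b*c = c and c*b = c. Then c*(a*b) = c and c*a = c. -/
/-- In a Szász–Hájek groupoid of type `(a, b, c)` satisfying the 𝓑 identities,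
if `b*c = c` and `c*b = c`, then `c*(a*b) = c` and `c*a = c`. -/
theorem SH_in_B_case4_products
    {G : Type*} (op : G → G → G) (a b c : G)
    (hB1 : ∀ x : G, op x x = x)
    (hB2 : ∀ x y : G, op x (op x y) = op x y)
    (hB3 : ∀ x y : G, op x (op y x) = op x y)
    (hB4 : ∀ x y : G, op (op x y) x = op x y)
    (hB5 : ∀ x y : G, op (op x y) y = op x y)
    (hB6 : ∀ x y : G, op (op x y) (op y x) = op x y)
    (hSH : ∀ x y z : G,
      op (op x y) z ≠ op x (op y z) ↔ x = a ∧ y = b ∧ z = c)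
    (hab : a ≠ b) (hbc : b ≠ c) (hac : a ≠ c)
    (hbc' : op b c = c) (hcb : op c b = c) :
    op c (op a b) = c ∧ op c a = c := by
  have as : ∀ x y z : G, ¬ (x = a ∧ y = b ∧ z = c) → op (op x y) z = op x (op y z) := by
    intro x y z h
    by_contra hn
    exact h ((hSH x y z).1 hn)
  have hca : op c a = c := by
    by_contra hne
    -- if `c*a ≠ c`, then `((a*b)*c)*a = a*c`
    have h1 : op (op (op a b) c) a = op a c := by
      rw [as (op a b) c a (fun h => hbc h.2.1.symm), as a b (op c a) (fun h => hne h.2.2),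
        ← as b c a (fun h => hab h.1.symm), hbc', hB3]
    have h2 : op (op a b) c = op a c := by
      calc op (op a b) c = op (op (op a b) c) (op a b) := (hB4 _ _).symm
        _ = op (op (op (op a b) c) a) b := (as _ a b (fun h => hab h.2.1)).symm
        _ = op (op a c) b := by rw [h1]
        _ = op a (op c b) := as a c b (fun h => hbc h.2.2)
        _ = op a c := by rw [hcb]
    exact (hSH a b c).2 ⟨rfl, rfl, rfl⟩ (by rw [h2, hbc'])
  refine ⟨?_, hca⟩
  rw [← as c a b (fun h => hac h.1.symm), hca, hcb]
end

section
/- Let G be a groupoid satisfying the three identities x*x = x, x*(y*z) = x*y, and (x*y)*y = x*y for all x, y, z ∈ G. Then G also satisfies: x*(y*x) = x*y, (x*y)*x = x*y, (x*y)*(y*x) = x*y, x*(y*(z*u)) = x*((y*z)*u), and, for every n ≥ 0 and all x, y₁,…,yₙ ∈ G, the absorption identity x*⟨x·y₁·…·yₙ⟩_L = x (where ⟨x·y₁·…·yₙ⟩_L denotes the left-associated product of x, y₁, …, yₙ). -/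
/-- A groupoid satisfying `x*x = x`, `x*(y*z) = x*y` and `(x*y)*y = x*y` also
satisfies `x*(y*x) = x*y`, `(x*y)*x = x*y`, `(x*y)*(y*x) = x*y`,
`x*(y*(z*u)) = x*((y*z)*u)`, and the absorption identities
`x*⟨x·y₁·…·yₙ⟩_L = x` for all `n ≥ 0`. -/
theorem D_cap_A_identities
    {G : Type*} (op : G → G → G)
    (h1 : ∀ x : G, op x x = x)
    (h2 : ∀ x y z : G, op x (op y z) = op x y)
    (h3 : ∀ x y : G, op (op x y) y = op x y) :
    (∀ x y : G, op x (op y x) = op x y) ∧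
    (∀ x y : G, op (op x y) x = op x y) ∧
    (∀ x y : G, op (op x y) (op y x) = op x y) ∧
    (∀ x y z u : G, op x (op y (op z u)) = op x (op (op y z) u)) ∧
    (∀ (x : G) (l : List G), op x (leftAssoc op x l) = x) := by
  have key : ∀ (l : List G) (a x : G), op a (l.foldl op x) = op a x := by
    intro l
    induction l with
    | nil => intro a x; rfl
    | cons b l ih => intro a x; rw [List.foldl_cons, ih, h2]
  refine ⟨fun x y => h2 x y x, fun x y => ?_, fun x y => ?_, fun x y z u => ?_, fun x l => ?_⟩
  · rw [← h2 (op x y) x y, h1]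
  · rw [h2, h3]
  · rw [h2, h2, h2]
  · unfold leftAssoc
    rw [key, h1]
end

section
/- For k ≥ 2 let A_k be the groupoid on the set ℤ_k ∪ {e} (disjoint union of the integers modulo k with an extra element e) with multiplication x*y = y if y ≠ e; x*e = x+1 if x ≠ e; e*e = e. Then A_k is idempotent and not associative, and for every n ≥ 3 with k dividing n−2, A_k satisfies the identity ⟨x₁⋯xₙ⟩_L = x₁*⟨x₂⋯xₙ⟩_L for all x₁,…,xₙ ∈ A_k. In particular, for n ≥ 4, A_{n−2} is an idempotent nonassociative groupoid satisfying ⟨x₁⋯xₙ⟩_L = x₁*⟨x₂⋯xₙ⟩_L. -/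
/-- The multiplication of the groupoid `A_k` on `ℤ_k ∪ {e}`, where the extra
element `e` is represented by `none`: `x*y = y` if `y ≠ e`; `x*e = x+1` if
`x ≠ e`; `e*e = e`. -/
def akOp (k : ℕ) : Option (ZMod k) → Option (ZMod k) → Option (ZMod k)
  | _, some b => some b
  | some a, none => some (a + 1)
  | none, none => none

lemma foldl_akOp_some (k : ℕ) (l : List (Option (ZMod k))) :
    ∀ a : ZMod k, ∃ b, l.foldl (akOp k) (some a) = some b := by
  induction l with
  | nil => intro a; exact ⟨a, rfl⟩
  | cons c l ih =>
    intro a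
    cases c with
    | none => exact ih (a + 1)
    | some c => exact ih c

lemma foldl_akOp_cases (k : ℕ) (l : List (Option (ZMod k))) :
    (l.foldl (akOp k) none = none ∧
      ∀ a : ZMod k, l.foldl (akOp k) (some a) = some (a + (l.length : ZMod k))) ∨
    ∃ b, ∀ u, l.foldl (akOp k) u = some b := by
  induction l with
  | nil => left; simp
  | cons c l ih =>
    cases c with
    | none =>
      rcases ih with ⟨h1, h2⟩ | ⟨b, hb⟩
      · left
        refine ⟨h1, fun a => ?_⟩
        have := h2 (a + 1)
        simp only [List.foldl_cons, akOp, this, List.length_cons, Nat.cast_add, Nat.cast_one]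
        congr 1
        ring
      · right
        exact ⟨b, fun u => by rw [List.foldl_cons, hb]⟩
    | some c =>
      right
      obtain ⟨b, hb⟩ := foldl_akOp_some k l c
      refine ⟨b, fun u => ?_⟩
      cases u <;> exact hb

/-- For `k ≥ 2`, the groupoid `A_k` is idempotent, not associative, and for
every `n ≥ 3` with `k ∣ n - 2` it satisfies the identity
`⟨x₁⋯xₙ⟩_L = x₁*⟨x₂⋯xₙ⟩_L`. -/
theorem akOp_idempotent_nonassociative_nulla
    (k : ℕ) (hk : 2 ≤ k) :
    (∀ x, akOp k x x = x) ∧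
    ¬(∀ x y z, akOp k (akOp k x y) z = akOp k x (akOp k y z)) ∧
    (∀ n : ℕ, 3 ≤ n → k ∣ n - 2 →
      ∀ (x y : Option (ZMod k)) (l : List (Option (ZMod k))),
        (y :: l).length = n - 1 →
        leftAssoc (akOp k) x (y :: l) = akOp k x (leftAssoc (akOp k) y l)) := by
  refine ⟨?_, ?_, ?_⟩
  · intro x
    cases x <;> rfl
  · intro h
    have h1 := h (some 0) none none
    simp only [akOp, Option.some.injEq] at h1
    have : Fact (1 < k) := ⟨hk⟩
    have h2 : (1 : ZMod k) = 0 := by linear_combination h1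
    exact one_ne_zero h2
  · intro n hn hd x y l hl
    have hlen : ((l.length : ℕ) : ZMod k) = 0 := by
      have : l.length = n - 2 := by
        simp only [List.length_cons] at hl
        omega
      rw [this]
      exact (ZMod.natCast_eq_zero_iff _ _).2 hd
    unfold leftAssoc
    rw [List.foldl_cons]
    rcases foldl_akOp_cases k l with ⟨h1, h2⟩ | ⟨b, hb⟩
    · cases x <;> cases y <;> simp [akOp, h1, h2, hlen]
    · rw [hb, hb]
      cases x <;> rfl
end

section
/- Let G be a groupoid satisfying the 𝓑 identities (x*x = x, x*(x*y) = x*y, x*(y*x) = x*y, (x*y)*x = x*y, (x*y)*y = x*y, (x*y)*(y*x) = x*y) and the identity x*(y*(z*u)) = x*((y*z)*u) for all x, y, z, u ∈ G. Then either G is a semigroup (the operation * is associative), or for every n ≥ 2 the number of distinct n-ary functions Gⁿ → G induced by bracketings of size n equals exactly 2^(n−2); that is, s_G(n) = 2^(n−2) for all n ≥ 2. -/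
namespace BCA

/-- right-nested product of `f i, …, f (i+k-1)` -/
def W {G : Type*} (op : G → G → G) (f : ℕ → G) : ℕ → ℕ → G
  | i, 0 => f i
  | i, 1 => f i
  | i, (k+2) => op (f i) (W op f (i+1) (k+1))

/-- left-nested product of blocks -/
def ev {G : Type*} (op : G → G → G) (f : ℕ → G) : List ℕ → G → ℕ → G
  | [], a, _ => a
  | k :: l, a, i => ev op f l (op a (W op f i k)) (i + k)

theorem size_pos (B : Bracketing) : 1 ≤ B.size := by
  induction B with
  | leaf => simp [Bracketing.size]
  | node P Q hP hQ => simp only [Bracketing.size]; omega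

theorem ev_append {G : Type*} (op : G → G → G) (f : ℕ → G) (l l' : List ℕ) (a : G) (i : ℕ) :
    ev op f (l ++ l') a i = ev op f l' (ev op f l a i) (i + l.sum) := by
  induction l generalizing a i with
  | nil => simp [ev]
  | cons k l ih => simp [ev, ih, add_assoc]

theorem eval_congr {G : Type*} (op : G → G → G) (f g : ℕ → G) (B : Bracketing) (i : ℕ)
    (h : ∀ j, i ≤ j → j < i + B.size → f j = g j) : B.eval op f i = B.eval op g i := by
  induction B generalizing i with
  | leaf => exact h i le_rfl (by simp [Bracketing.size])
  | node P Q hP hQ =>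
    simp only [Bracketing.size] at h
    simp only [Bracketing.eval]
    rw [hP i (fun j h1 h2 => h j h1 (by omega)),
      hQ _ (fun j h1 h2 => h j (by omega) (by omega))]

theorem W_congr {G : Type*} (op : G → G → G) (f g : ℕ → G) (k i : ℕ)
    (h : ∀ j, i ≤ j → f j = g j) : W op f i k = W op g i k := by
  induction k generalizing i with
  | zero => exact h i le_rfl
  | succ k ih =>
    cases k with
    | zero => exact h i le_rfl
    | succ k =>
      simp only [W]
      rw [h i le_rfl, ih (i+1) (fun j hj => h j (by omega))]

theorem ev_congr {G : Type*} (op : G → G → G) (f g : ℕ → G) (l : List ℕ) (a : G) (i : ℕ)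
    (h : ∀ j, i ≤ j → f j = g j) : ev op f l a i = ev op g l a i := by
  induction l generalizing a i with
  | nil => rfl
  | cons k l ih =>
    simp only [ev]
    rw [W_congr op f g k i h, ih _ _ (fun j hj => h j (by omega))]

theorem exists_W {G : Type*} (op : G → G → G) (k : ℕ) : ∃ B : Bracketing, B.size = k + 1 ∧
    ∀ (f : ℕ → G) (i : ℕ), B.eval op f i = W op f i (k+1) := by
  induction k with
  | zero => exact ⟨.leaf, rfl, fun _ _ => rfl⟩
  | succ k ih =>
    obtain ⟨B, h1, h2⟩ := ih
    refine ⟨.node .leaf B, by simp [Bracketing.size, h1]; omega, fun f i => ?_⟩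
    simp [Bracketing.eval, W, h2, Bracketing.size]

theorem exists_ev {G : Type*} (op : G → G → G) (l : List ℕ) (hl : ∀ k ∈ l, 0 < k) :
    ∀ B₀ : Bracketing, ∃ B : Bracketing, B.size = B₀.size + l.sum ∧
    ∀ (f : ℕ → G) (i : ℕ), B.eval op f i = ev op f l (B₀.eval op f i) (i + B₀.size) := by
  induction l with
  | nil => exact fun B₀ => ⟨B₀, by simp, fun f i => rfl⟩
  | cons k l ih =>
    intro B₀
    obtain ⟨m, rfl⟩ : ∃ m, k = m + 1 := ⟨k - 1, by have := hl k (by simp); omega⟩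
    obtain ⟨C, hC1, hC2⟩ := exists_W op m
    obtain ⟨B, h1, h2⟩ := ih (fun k hk => hl k (by simp [hk])) (.node B₀ C)
    refine ⟨B, by simp [h1, Bracketing.size, hC1]; omega, fun f i => ?_⟩
    rw [h2]
    simp only [Bracketing.eval, Bracketing.size, ev, hC2, hC1, add_assoc]


theorem W_mul {G : Type*} (op : G → G → G)
    (hA : ∀ x y z u : G, op x (op y (op z u)) = op x (op (op y z) u))
    (f : ℕ → G) (j k i : ℕ) (a : G) :
    op a (op (W op f i (j+1)) (W op f (i+(j+1)) (k+1))) = op a (W op f i (j+1+(k+1))) := by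
  induction j generalizing a i with
  | zero =>
    have : 0 + 1 + (k+1) = k + 2 := by omega
    rw [this]; rfl
  | succ j ih =>
    have e : j + 1 + 1 + (k+1) = (j + 1 + k) + 2 := by omega
    rw [e]
    simp only [W]
    rw [← hA]
    have := ih (i+1) (f i)
    rw [show i + 1 + (j+1) = i + (j+1+1) by omega] at this
    rw [this]
    rfl

theorem W_mul' {G : Type*} (op : G → G → G)
    (hA : ∀ x y z u : G, op x (op y (op z u)) = op x (op (op y z) u))
    (f : ℕ → G) (j k i : ℕ) (a c : G) :
    op a (op (op (W op f i (j+1)) (W op f (i+(j+1)) (k+1))) c)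
      = op a (op (W op f i (j+1+(k+1))) c) := by
  induction j generalizing a i with
  | zero =>
    have : 0 + 1 + (k+1) = k + 2 := by omega
    rw [this]; rfl
  | succ j ih =>
    have e : j + 1 + 1 + (k+1) = (j + 1 + k) + 2 := by omega
    rw [e]
    simp only [W]
    have := ih (i+1) (f i)
    rw [show i + 1 + (j+1) = i + (j+1+1) by omega] at this
    rw [← hA, ← hA, hA (f i), this, hA]
    rfl

theorem flat' {G : Type*} (op : G → G → G)
    (hA : ∀ x y z u : G, op x (op y (op z u)) = op x (op (op y z) u))
    (f : ℕ → G) (B : Bracketing) (i : ℕ) (a c : G) :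
    op a (op (B.eval op f i) c) = op a (op (W op f i B.size) c) := by
  induction B generalizing i a c with
  | leaf => rfl
  | node P Q hP hQ =>
    obtain ⟨p, hp⟩ : ∃ m, P.size = m + 1 := ⟨P.size - 1, by have := size_pos P; omega⟩
    obtain ⟨q, hq⟩ : ∃ m, Q.size = m + 1 := ⟨Q.size - 1, by have := size_pos Q; omega⟩
    simp only [Bracketing.eval, Bracketing.size]
    rw [← hA, hQ, hP, hp, hq, ← W_mul' op hA, ← hA]

theorem flat {G : Type*} (op : G → G → G)
    (hA : ∀ x y z u : G, op x (op y (op z u)) = op x (op (op y z) u))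
    (f : ℕ → G) (B : Bracketing) (i : ℕ) (a : G) :
    op a (B.eval op f i) = op a (W op f i B.size) := by
  induction B generalizing i a with
  | leaf => rfl
  | node P Q hP hQ =>
    obtain ⟨p, hp⟩ : ∃ m, P.size = m + 1 := ⟨P.size - 1, by have := size_pos P; omega⟩
    obtain ⟨q, hq⟩ : ∃ m, Q.size = m + 1 := ⟨Q.size - 1, by have := size_pos Q; omega⟩
    simp only [Bracketing.eval, Bracketing.size]
    rw [hQ, flat' op hA, hp, hq, W_mul op hA]

theorem exists_list {G : Type*} (op : G → G → G)
    (hA : ∀ x y z u : G, op x (op y (op z u)) = op x (op (op y z) u))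
    (B : Bracketing) : ∃ l : List ℕ, (∀ k ∈ l, 0 < k) ∧ l.sum + 1 = B.size ∧
    ∀ (f : ℕ → G) (i : ℕ), B.eval op f i = ev op f l (f i) (i + 1) := by
  induction B with
  | leaf => exact ⟨[], by simp, rfl, fun f i => rfl⟩
  | node P Q hP hQ =>
    obtain ⟨l, h1, h2, h3⟩ := hP
    refine ⟨l ++ [Q.size], ?_, ?_, ?_⟩
    · intro k hk
      rcases List.mem_append.1 hk with hk | hk
      · exact h1 k hk
      · have := size_pos Q
        simp at hk; omega
    · simp [Bracketing.size]; omega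
    · intro f i
      rw [ev_append]
      simp only [Bracketing.eval, ev]
      rw [flat op hA, h3, ← h2, show i + 1 + l.sum = i + (l.sum + 1) by omega]

section
variable {G : Type*} (op : G → G → G) (f : ℕ → G)

theorem W_const (hB1 : ∀ x : G, op x x = x) (c : G) (k i : ℕ) (hk : 0 < k)
    (h : ∀ j, i ≤ j → j < i + k → f j = c) : W op f i k = c := by
  induction k generalizing i with
  | zero => omega
  | succ k ih =>
    cases k with
    | zero => exact h i le_rfl (by omega)
    | succ k =>
      simp only [W]
      rw [h i le_rfl (by omega), ih (i+1) (by omega) (fun j h1 h2 => h j (by omega) (by omega)), hB1]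

theorem W_two (hB1 : ∀ x : G, op x x = x) (hB2 : ∀ x y : G, op x (op x y) = op x y)
    (y z : G) (a c i : ℕ) (hc : 0 < c)
    (h : ∀ j, i ≤ j → j < i + (a+1) → f j = y)
    (h' : ∀ j, i + (a+1) ≤ j → j < i + (a+1) + c → f j = z) :
    W op f i (a+1+c) = op y z := by
  obtain ⟨d, rfl⟩ : ∃ d, c = d + 1 := ⟨c - 1, by omega⟩
  induction a generalizing i with
  | zero =>
    rw [show 0 + 1 + (d+1) = d + 2 by omega]
    simp only [W]
    rw [h i le_rfl (by omega), W_const op f hB1 z (d+1) (i+1) (by omega)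
      (fun j h1 h2 => h' j (by omega) (by omega))]
  | succ a ih =>
    rw [show a + 1 + 1 + (d+1) = (a + 1 + d) + 2 by omega]
    simp only [W]
    rw [h i le_rfl (by omega), show a + 1 + d + 1 = a + 1 + (d + 1) by omega,
      ih (i+1) (fun j h1 h2 => h j (by omega) (by omega))
        (fun j h1 h2 => h' j (by omega) (by omega)), hB2]

theorem ev_absorb (hB1 : ∀ x : G, op x x = x) (t w : G) (htw : op t w = t) (l : List ℕ)
    (hl : ∀ k ∈ l, 0 < k) (i : ℕ) (h : ∀ j, i ≤ j → f j = w) : ev op f l t i = t := by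
  induction l generalizing i with
  | nil => rfl
  | cons k l ih =>
    simp only [ev]
    rw [W_const op f hB1 w k i (hl k (by simp)) (fun j h1 _ => h j h1), htw,
      ih (fun k hk => hl k (by simp [hk])) _ (fun j hj => h j (by omega))]

theorem ev_tail (hB1 : ∀ x : G, op x x = x) (hB2 : ∀ x y : G, op x (op x y) = op x y)
    (t z w r : G) (h1 : op t z = r) (h2 : op r z = r) (h3 : op t (op z w) = r)
    (h4 : op r (op z w) = r) (h5 : op r w = r) (l : List ℕ)
    (hl : ∀ k ∈ l, 0 < k) (i c : ℕ) (hc : 0 < c) (hs : c ≤ l.sum) (s : G) (hst : s = t ∨ s = r)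
    (hz : ∀ j, i ≤ j → j < i + c → f j = z)
    (hw : ∀ j, i + c ≤ j → f j = w) : ev op f l s i = r := by
  induction l generalizing i c s with
  | nil => simp at hs; omega
  | cons k l ih =>
    have hk := hl k (by simp)
    have hl' : ∀ k ∈ l, 0 < k := fun k hk => hl k (by simp [hk])
    simp only [List.sum_cons] at hs
    simp only [ev]
    have hsz : op s z = r := by rcases hst with rfl | rfl <;> assumption
    have hszw : op s (op z w) = r := by rcases hst with rfl | rfl <;> assumption
    rcases lt_trichotomy k c with h | h | h
    · rw [W_const op f hB1 z k i hk (fun j h1 _ => hz j h1 (by omega)), hsz]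
      exact ih hl' (i+k) (c-k) (by omega) (by omega) r (Or.inr rfl)
        (fun j h1 h2 => hz j (by omega) (by omega)) (fun j h1 => hw j (by omega))
    · subst h
      rw [W_const op f hB1 z k i hk hz, hsz]
      exact ev_absorb op f hB1 r w h5 l hl' _ hw
    · have e : W op f i k = op z w := by
        have := W_two op f hB1 hB2 z w (c-1) (k-c) i (by omega)
          (fun j h1 h2 => hz j h1 (by omega)) (fun j h1 _ => hw j (by omega))
        rwa [show c - 1 + 1 + (k - c) = k by omega] at this
      rw [e, hszw]
      exact ev_absorb op f hB1 r w h5 l hl' _ (fun j hj => hw j (by omega))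
end


theorem core {G : Type*} (op : G → G → G)
    (hB1 : ∀ x : G, op x x = x)
    (hB2 : ∀ x y : G, op x (op x y) = op x y)
    (hB3 : ∀ x y : G, op x (op y x) = op x y)
    (hB5 : ∀ x y : G, op (op x y) y = op x y)
    (hB6 : ∀ x y : G, op (op x y) (op y x) = op x y)
    (hA : ∀ x y z u : G, op x (op y (op z u)) = op x (op (op y z) u))
    (a b : ℕ) (l l' : List ℕ) (i : ℕ) (ha : 0 < a) (hab : a < b)
    (hl : ∀ k ∈ l, 0 < k) (hl' : ∀ k ∈ l', 0 < k) (hs : a + l.sum = b + l'.sum)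
    (h : ∀ (x : G) (f : ℕ → G), ev op f (a :: l) x i = ev op f (b :: l') x i) (x y z : G) :
    op (op x y) z = op x (op y z) := by
  set w := op x (op y z) with hw
  have hzw : op z w = op z (op x y) := by rw [hw, hA, hB3]
  let f : ℕ → G := fun j => if j < i + a then y else if j < i + b then z else w
  have f1 : ∀ j, j < i + a → f j = y := fun j hj => if_pos hj
  have f2 : ∀ j, i + a ≤ j → j < i + b → f j = z := fun j h1 h2 => by
    simp only [f]; rw [if_neg (by omega), if_pos h2]
  have f3 : ∀ j, i + b ≤ j → f j = w := fun j h1 => by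
    simp only [f]; rw [if_neg (by omega), if_neg (by omega)]
  have key := h x f
  simp only [ev] at key
  rw [W_const op f hB1 y a i ha (fun j _ h2 => f1 j h2)] at key
  rw [ev_tail op f hB1 hB2 (op x y) z w (op (op x y) z) rfl (hB5 _ _)
    (by rw [hzw, hB3]) (by rw [hzw, hB6]) (by rw [hw, hA, hB1]) l hl (i+a) (b-a) (by omega)
    (by omega) _ (Or.inl rfl) (fun j h1 h2 => f2 j h1 (by omega))
    (fun j h1 => f3 j (by omega))] at key
  have e : W op f i b = op y z := by
    have := W_two op f hB1 hB2 y z (a-1) (b-a) i (by omega)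
      (fun j h1 h2 => f1 j (by omega)) (fun j h1 h2 => f2 j (by omega) (by omega))
    rwa [show a - 1 + 1 + (b - a) = b by omega] at this
  rw [e, ev_absorb op f hB1 w w (hB1 w) l' hl' _ f3] at key
  exact key

theorem inj {G : Type*} (op : G → G → G)
    (hB1 : ∀ x : G, op x x = x)
    (hB2 : ∀ x y : G, op x (op x y) = op x y)
    (hB3 : ∀ x y : G, op x (op y x) = op x y)
    (hB5 : ∀ x y : G, op (op x y) y = op x y)
    (hB6 : ∀ x y : G, op (op x y) (op y x) = op x y)
    (hA : ∀ x y z u : G, op x (op y (op z u)) = op x (op (op y z) u))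
    (hna : ¬ ∀ x y z : G, op (op x y) z = op x (op y z)) (l l' : List ℕ) (i : ℕ)
    (hl : ∀ k ∈ l, 0 < k) (hl' : ∀ k ∈ l', 0 < k) (hs : l.sum = l'.sum)
    (h : ∀ (x : G) (f : ℕ → G), ev op f l x i = ev op f l' x i) : l = l' := by
  induction l generalizing l' i with
  | nil =>
    cases l' with
    | nil => rfl
    | cons b l' => have := hl' b (by simp); simp at hs; omega
  | cons a l ih =>
    have ha := hl a (by simp)
    cases l' with
    | nil => simp at hs; omega
    | cons b l' =>
      have hb := hl' b (by simp)
      have h1 : ∀ k ∈ l, 0 < k := fun k hk => hl k (by simp [hk])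
      have h2 : ∀ k ∈ l', 0 < k := fun k hk => hl' k (by simp [hk])
      simp only [List.sum_cons] at hs
      rcases lt_trichotomy a b with hab | hab | hab
      · exact absurd (core op hB1 hB2 hB3 hB5 hB6 hA a b l l' i ha hab h1 h2 hs h) hna
      · subst hab
        rw [ih l' (i+a) h1 h2 (by omega)]
        intro x f
        let g : ℕ → G := fun j => if j < i + a then x else f j
        have g2 : ∀ j, i + a ≤ j → g j = f j := fun j hj => if_neg (by omega)
        have key := h x g
        simp only [ev] at key
        rw [W_const op g hB1 x a i ha (fun j _ h2 => if_pos h2), hB1,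
          ev_congr op g f l _ _ g2, ev_congr op g f l' _ _ g2] at key
        exact key
      · exact absurd (core op hB1 hB2 hB3 hB5 hB6 hA b a l' l i hb hab h2 h1 hs.symm
          (fun x f => (h x f).symm)) hna

end BCA

/-- A groupoid satisfying the 𝓑 identities together with
`x*(y*(z*u)) = x*((y*z)*u)` is either a semigroup or its associative spectrum
is exactly `s_G(n) = 2^(n-2)` for all `n ≥ 2`. -/
theorem B_cap_A_spectrum
    {G : Type*} (op : G → G → G)
    (hB1 : ∀ x : G, op x x = x)
    (hB2 : ∀ x y : G, op x (op x y) = op x y)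
    (hB3 : ∀ x y : G, op x (op y x) = op x y)
    (hB4 : ∀ x y : G, op (op x y) x = op x y)
    (hB5 : ∀ x y : G, op (op x y) y = op x y)
    (hB6 : ∀ x y : G, op (op x y) (op y x) = op x y)
    (hA : ∀ x y z u : G, op x (op y (op z u)) = op x (op (op y z) u)) :
    (∀ x y z : G, op (op x y) z = op x (op y z)) ∨
    (∀ n : ℕ, ∀ hn : 2 ≤ n,
      Set.Finite {F : (Fin n → G) → G | ∃ B : Bracketing, B.size = n ∧
        F = fun v => B.eval op (fun i => v ⟨i % n, Nat.mod_lt i (by omega)⟩) 0} ∧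
      Set.ncard {F : (Fin n → G) → G | ∃ B : Bracketing, B.size = n ∧
        F = fun v => B.eval op (fun i => v ⟨i % n, Nat.mod_lt i (by omega)⟩) 0} =
        2 ^ (n - 2)) := by
  by_cases hna : ∀ x y z : G, op (op x y) z = op x (op y z)
  · exact Or.inl hna
  refine Or.inr fun n hn => ?_
  let Φ : Composition (n-1) → ((Fin n → G) → G) := fun c v =>
    BCA.ev op (fun i => v ⟨i % n, Nat.mod_lt i (by omega)⟩) c.blocks (v ⟨0, by omega⟩) 1
  have hset : {F : (Fin n → G) → G | ∃ B : Bracketing, B.size = n ∧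
        F = fun v => B.eval op (fun i => v ⟨i % n, Nat.mod_lt i (by omega)⟩) 0}
      = Set.range Φ := by
    ext F
    constructor
    · rintro ⟨B, hB, rfl⟩
      obtain ⟨l, h1, h2, h3⟩ := BCA.exists_list op hA B
      refine ⟨⟨l, fun {k} hk => h1 k hk, by omega⟩, ?_⟩
      funext v
      simp [Φ, h3]
    · rintro ⟨c, rfl⟩
      obtain ⟨B, h1, h2⟩ := BCA.exists_ev op c.blocks (fun k hk => c.blocks_pos hk) .leaf
      refine ⟨B, ?_, ?_⟩
      · rw [h1, c.blocks_sum]; simp only [Bracketing.size]; omega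
      · funext v
        simp [Φ, h2, Bracketing.eval, Bracketing.size]
  have hinj : Function.Injective Φ := by
    intro c c' hcc
    apply Composition.ext
    refine BCA.inj op hB1 hB2 hB3 hB5 hB6 hA hna c.blocks c'.blocks 1
      (fun k hk => c.blocks_pos hk) (fun k hk => c'.blocks_pos hk)
      (by rw [c.blocks_sum, c'.blocks_sum]) ?_
    intro x f
    obtain ⟨B, h1, h2⟩ := BCA.exists_ev op c.blocks (fun k hk => c.blocks_pos hk) .leaf
    obtain ⟨B', h1', h2'⟩ := BCA.exists_ev op c'.blocks (fun k hk => c'.blocks_pos hk) .leaf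
    rw [c.blocks_sum] at h1
    rw [c'.blocks_sum] at h1'
    simp only [Bracketing.size, Bracketing.eval] at h1 h2 h1' h2'
    -- the stream with `x` at position zero
    let g : ℕ → G := fun j => if j = 0 then x else f j
    let m : ℕ → G := fun i => g (i % n)
    have e1 : BCA.ev op g c.blocks (g 0) (0+1) = BCA.ev op m c.blocks (m 0) (0+1) := by
      rw [← h2, ← h2]
      exact BCA.eval_congr op g m B 0 fun j _ hj => by
        simp only [m]; rw [Nat.mod_eq_of_lt (by omega)]
    have e2 : BCA.ev op g c'.blocks (g 0) (0+1) = BCA.ev op m c'.blocks (m 0) (0+1) := by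
      rw [← h2', ← h2']
      exact BCA.eval_congr op g m B' 0 fun j _ hj => by
        simp only [m]; rw [Nat.mod_eq_of_lt (by omega)]
    have e3 : BCA.ev op m c.blocks (m 0) (0+1) = BCA.ev op m c'.blocks (m 0) (0+1) := by
      have := congrFun hcc (fun j => g j)
      simpa [Φ, m] using this
    have e4 : ∀ j, 1 ≤ j → g j = f j := fun j hj => if_neg (by omega)
    rw [← BCA.ev_congr op g f _ x 1 e4, ← BCA.ev_congr op g f _ x 1 e4]
    exact e1.trans (e3.trans e2.symm)
  rw [hset]
  refine ⟨Set.finite_range Φ, ?_⟩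
  rw [← Set.image_univ, Set.ncard_image_of_injective _ hinj, Set.ncard_univ,
    Nat.card_eq_fintype_card, composition_card]
  congr 1
end
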